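/- arXiv:math/0411588 — 2 statements merged into one kernel-verified Lean document; each statement's English description precedes it below -/
import Mathlib

section
/- In the ring B_A one has q_k · q̄_k = 1 for every 1 ≤ k ≤ m; in particular the images of q_k and q̄_k are units of B_A, inverse to one another. -/
open MvPolynomial

/-- The polynomials `q_k` of Definition 3, defined inductively from a strictly upper
triangular integer matrix `A` (indices `0,…,m-1` correspond to the paper's `1,…,m`). -/
noncomputable def qpol {m : ℕ} (A : Fin m → Fin m → ℤ) : Fin m → MvPolynomial (Fin m) ℤ
  | k =>
    ∏ i ∈ (Finset.Iio k).attach,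
      ((X i.1 + 1) ^ (A i.1 k).toNat * (-(qpol A i.1 * X i.1) + 1) ^ (-(A i.1 k)).toNat)
  termination_by k => (k : ℕ)
  decreasing_by exact Fin.lt_iff_val_lt_val.mp (Finset.mem_Iio.mp i.2)

/-- The polynomials `q̄_k` of Definition 3. -/
noncomputable def qbar {m : ℕ} (A : Fin m → Fin m → ℤ) (k : Fin m) : MvPolynomial (Fin m) ℤ :=
  ∏ i ∈ Finset.Iio k,
    ((-(qpol A i * X i) + 1) ^ (A i k).toNat * (X i + 1) ^ (-(A i k)).toNat)

/-- The ideal `⟨y_k² − (q̄_k − 1)·y_k : 1 ≤ k ≤ m⟩` of `ℤ[y₁,…,y_m]`. -/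
noncomputable def relIdeal {m : ℕ} (A : Fin m → Fin m → ℤ) : Ideal (MvPolynomial (Fin m) ℤ) :=
  Ideal.span (Set.range fun k : Fin m => X k ^ 2 - (qbar A k - 1) * X k)

/-- The quotient ring `B_A = ℤ[y₁,…,y_m]/⟨y_k² − (q̄_k − 1)·y_k⟩`. -/
abbrev BA {m : ℕ} (A : Fin m → Fin m → ℤ) :=
  MvPolynomial (Fin m) ℤ ⧸ relIdeal A

/-- The class `y_I ∈ B_A` of the squarefree monomial `∏_{i ∈ I} y_i`. -/
noncomputable def yI {m : ℕ} (A : Fin m → Fin m → ℤ) (I : Finset (Fin m)) : BA A :=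
  Ideal.Quotient.mk (relIdeal A) (∏ i ∈ I, X i)

/-!
By induction on `k`, suppose `q_i q̄_i = 1` for every `i < k`. Multiplying `y_i² = (q̄_i - 1) y_i`
by `q_i` gives `q_i y_i² = y_i - q_i y_i`, which says that `y_i + 1` and `1 - q_i y_i` are inverse
to one another. Passing from `q_k` to `q̄_k` exchanges these two factors for each `i < k`, so the
product `q_k q̄_k` cancels.
-/

theorem add_one_mul_neg_mul_add_one_eq_one {R : Type*} [CommRing R] {p q y : R}
    (hqp : q * p = 1) (hy : y ^ 2 = (p - 1) * y) : (y + 1) * (-(q * y) + 1) = 1 := by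
  have hqy : q * y ^ 2 = y - q * y := by
    calc
      q * y ^ 2 = (q * p) * y - q * y := by rw [hy]; ring
      _ = y - q * y := by rw [hqp, one_mul]
  calc
    (y + 1) * (-(q * y) + 1) = y - q * y - q * y ^ 2 + 1 := by ring
    _ = 1 := by rw [hqy, sub_self, zero_add]

theorem prod_pow_mul_pow_mul_prod_pow_mul_pow_eq_one {ι M : Type*} [CommMonoid M] {s : Finset ι}
    {u v : ι → M} (huv : ∀ i ∈ s, u i * v i = 1) (a b : ι → ℕ) :
    (∏ i ∈ s, u i ^ a i * v i ^ b i) * ∏ i ∈ s, v i ^ a i * u i ^ b i = 1 := by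
  rw [← Finset.prod_mul_distrib]
  refine Finset.prod_eq_one fun i hi => ?_
  calc
    u i ^ a i * v i ^ b i * (v i ^ a i * u i ^ b i)
        = (u i * v i) ^ a i * (u i * v i) ^ b i := by
      rw [mul_mul_mul_comm, mul_comm (v i ^ b i), ← mul_pow, ← mul_pow]
    _ = 1 := by rw [huv i hi, one_pow, one_pow, one_mul]

theorem qpol_eq_prod {m : ℕ} (A : Fin m → Fin m → ℤ) (k : Fin m) :
    qpol A k = ∏ i ∈ Finset.Iio k,
      ((X i + 1) ^ (A i k).toNat * (-(qpol A i * X i) + 1) ^ (-(A i k)).toNat) := by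
  rw [qpol]
  exact Finset.prod_attach (Finset.Iio k) fun i =>
    (X i + 1) ^ (A i k).toNat * (-(qpol A i * X i) + 1) ^ (-(A i k)).toNat

theorem map_qpol_mul_map_qbar {m : ℕ} {A : Fin m → Fin m → ℤ} {k : Fin m} {R : Type*} [CommRing R]
    (φ : MvPolynomial (Fin m) ℤ →+* R)
    (hφ : ∀ i < k, φ (X i) ^ 2 = (φ (qbar A i) - 1) * φ (X i)) :
    φ (qpol A k) * φ (qbar A k) = 1 := by
  induction k using WellFoundedLT.induction with
  | ind k ih =>
    have hinv : ∀ i ∈ Finset.Iio k, (φ (X i) + 1) * (-(φ (qpol A i) * φ (X i)) + 1) = 1 := by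
      intro i hi
      have hik : i < k := Finset.mem_Iio.mp hi
      have hqi : φ (qpol A i) * φ (qbar A i) = 1 := ih i hik fun j hj => hφ j (hj.trans hik)
      exact add_one_mul_neg_mul_add_one_eq_one hqi (hφ i hik)
    rw [qpol_eq_prod, qbar]
    simp only [map_prod, map_mul, map_pow, map_add, map_neg, map_one]
    exact prod_pow_mul_pow_mul_prod_pow_mul_pow_eq_one hinv _ _

theorem mk_X_sq {m : ℕ} (A : Fin m → Fin m → ℤ) (k : Fin m) :
    Ideal.Quotient.mk (relIdeal A) (X k) ^ 2 =
      (Ideal.Quotient.mk (relIdeal A) (qbar A k) - 1) * Ideal.Quotient.mk (relIdeal A) (X k) := by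
  have h : Ideal.Quotient.mk (relIdeal A) (X k ^ 2) =
      Ideal.Quotient.mk (relIdeal A) ((qbar A k - 1) * X k) :=
    Ideal.Quotient.eq.mpr (Ideal.subset_span ⟨k, rfl⟩)
  simpa only [map_pow, map_mul, map_sub, map_one] using h

/-- In the ring `B_A` one has `q_k · q̄_k = 1` for every `k`; in particular the images
of `q_k` and `q̄_k` are units of `B_A`, inverse to one another. -/
theorem stmt2 {m : ℕ} (hm : 0 < m) (A : Fin m → Fin m → ℤ)
    (hA : ∀ i j : Fin m, j ≤ i → A i j = 0) (k : Fin m) :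
    Ideal.Quotient.mk (relIdeal A) (qpol A k) * Ideal.Quotient.mk (relIdeal A) (qbar A k) = 1 ∧
    IsUnit (Ideal.Quotient.mk (relIdeal A) (qpol A k)) ∧
    IsUnit (Ideal.Quotient.mk (relIdeal A) (qbar A k)) := by
  have h := map_qpol_mul_map_qbar (k := k) (Ideal.Quotient.mk (relIdeal A)) fun i _ => mk_X_sq A i
  exact ⟨h, .of_mul_eq_one _ h, .of_mul_eq_one_right _ h⟩
end

section
/- For every f ∈ ℤ[y₁,…,y_m], if the image of f in B_A is written in its unique expansion Σ_{I ⊆ {1,…,m}} a_I(f)·y_I with a_I(f) ∈ ℤ, then the top coefficient satisfies a_{{1,…,m}}(f) = Δ_A(f_{(m)}). -/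
open MvPolynomial

/-- `f_{(n)}`: the sum of the monomials of `f` of total degree at most `n`. -/
noncomputable def trunc {σ : Type*} (n : ℕ) (f : MvPolynomial σ ℤ) : MvPolynomial σ ℤ :=
  ∑ d ∈ f.support.filter (fun d => (d.sum fun _ e => e) ≤ n),
    monomial d (coeff d f)

/-- The coefficient `h_n ∈ ℤ[y₁,…,ŷ_k,…,y_m]` of `y_k^n` in the expansion of `f`
in powers of `y_k`. -/
noncomputable def coeffOf {m : ℕ} (k : Fin m) (n : ℕ) (f : MvPolynomial (Fin m) ℤ) :
    MvPolynomial (Fin m) ℤ :=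
  ∑ d ∈ f.support.filter (fun d => d k = n), monomial (d.erase k) (coeff d f)

/-- The operator `D_{k-1}` of Definition 4 (`k : Fin m` corresponds to the paper's
`k+1`): writing `f = h₀ + h₁ y_k + ⋯`, set
`D(f) = [h₁ + h₂(q̄_k − 1) + ⋯]_{(k)}`. -/
noncomputable def Dop {m : ℕ} (A : Fin m → Fin m → ℤ) (k : Fin m)
    (f : MvPolynomial (Fin m) ℤ) : MvPolynomial (Fin m) ℤ :=
  trunc (k : ℕ)
    (∑ n ∈ Finset.Icc 1 ((k : ℕ) + 1), coeffOf k n f * (qbar A k - 1) ^ (n - 1))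

/-- Auxiliary iteration: `DeltaAux A j = D₀ ∘ D₁ ∘ ⋯ ∘ D_{j-1}`. -/
noncomputable def DeltaAux {m : ℕ} (A : Fin m → Fin m → ℤ) :
    ℕ → MvPolynomial (Fin m) ℤ → MvPolynomial (Fin m) ℤ
  | 0, f => f
  | j + 1, f => DeltaAux A j (if h : j < m then Dop A ⟨j, h⟩ f else f)

/-- The operator `Δ_A = D₀ ∘ D₁ ∘ ⋯ ∘ D_{m−1} : ℤ[y₁,…,y_m]_{(m)} → ℤ`. -/
noncomputable def Delta {m : ℕ} (A : Fin m → Fin m → ℤ) (f : MvPolynomial (Fin m) ℤ) : ℤ :=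
  MvPolynomial.coeff 0 (DeltaAux A m f)

/-!
Without its truncation, `D_{k-1}` is the divided difference `f ↦ (f(y_k) - f(0)) / y_k` evaluated at
`y_k = q̄_k - 1`. It is linear over the polynomials not involving `y_k` and kills every multiple of
`y_k² - (q̄_k - 1) y_k`, so the composite of these operators descends to `B_A`; on squarefree
monomials it picks out the coefficient of `y₁⋯y_m`. The truncations do not affect the result: if `I`
is the ideal generated by the variables, then `q̄_k - 1 ∈ I`, so each divided difference maps `Iⁿ⁺¹`
to `Iⁿ`, and the truncation in `D_k` discards an element of `Iᵏ⁺¹`, which the remaining operators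
`D_{k-1}, …, D_0` send into `I`, where the constant term vanishes.
-/

section Variables

variable {σ R : Type*} [CommSemiring R]

lemma X_mem_supported_of_mem {s : Set σ} {i : σ} (hi : i ∈ s) :
    (X i : MvPolynomial σ R) ∈ supported R s :=
  Algebra.subset_adjoin (Set.mem_image_of_mem X hi)

lemma exists_eq_X_mul_add (k : σ) (f : MvPolynomial σ R) :
    ∃ g, ∃ r ∈ supported R {k}ᶜ, f = X k * g + r := by
  refine ⟨f.divMonomial (.single k 1), f.modMonomial (.single k 1), ?_,
    (divMonomial_add_modMonomial_single f k).symm⟩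
  rw [mem_supported, Set.subset_compl_singleton_iff, Finset.mem_coe, mem_vars_iff_mem_support]
  rintro ⟨d, hd, hdk⟩
  refine mem_support_iff.mp hd (coeff_modMonomial_of_le f ?_)
  rw [Finsupp.single_le_iff]
  exact Nat.one_le_iff_ne_zero.mpr (Finsupp.mem_support_iff.mp hdk)

lemma divMonomial_single_mem_pow_idealOfVars (k : σ) {n : ℕ} {f : MvPolynomial σ R}
    (hf : f ∈ idealOfVars σ R ^ (n + 1)) :
    f.divMonomial (.single k 1) ∈ idealOfVars σ R ^ n := by
  rw [mem_pow_idealOfVars_iff'] at hf ⊢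
  intro d hd
  rw [coeff_divMonomial]
  apply hf
  rw [map_add, Finsupp.degree_single]
  lia

lemma aeval_mem_pow_of_mem_pow_idealOfVars {S : Type*} [CommSemiring S] [Algebra R S] {I : Ideal S}
    {g : σ → S} (hg : ∀ i, g i ∈ I) {n : ℕ} {f : MvPolynomial σ R}
    (hf : f ∈ idealOfVars σ R ^ n) : aeval g f ∈ I ^ n := by
  have hI : idealOfVars σ R ≤ I.comap (aeval g) := by
    rw [Ideal.span_le]
    rintro _ ⟨i, rfl⟩
    simpa using hg i
  exact Ideal.le_comap_pow _ n (Ideal.pow_right_mono hI n hf)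

lemma aeval_update_X_of_mem_supported [DecidableEq σ] {k : σ} (u : MvPolynomial σ R)
    {f : MvPolynomial σ R} (hf : f ∈ supported R {k}ᶜ) :
    aeval (Function.update X k u) f = f := by
  have hX : Set.EqOn (aeval (Function.update X k u)) (AlgHom.id R (MvPolynomial σ R))
      (X '' {k}ᶜ) := by
    rintro _ ⟨i, hi, rfl⟩
    simp [Function.update_of_ne hi]
  exact AlgHom.eqOn_adjoin_iff.mpr hX hf

end Variables

section DividedDifference

variable {σ R : Type*} [CommRing R] [DecidableEq σ]

/-- The divided difference of `f = h₀ + h₁ y_k + h₂ y_k² + ⋯` in the variable `y_k` between `0`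
and `u`, that is `h₁ + h₂ u + h₃ u² + ⋯`: the operator `D_{k-1}` without its truncation when
`u = q̄_k - 1`. It is obtained by dividing `f - h₀` by `y_k` and substituting `u` for `y_k`. -/
noncomputable def divDiff (k : σ) (u : MvPolynomial σ R) :
    MvPolynomial σ R →ₗ[R] MvPolynomial σ R :=
  (aeval (Function.update X k u)).toLinearMap ∘ₗ
    { toFun := fun f => f.divMonomial (.single k 1)
      map_add' := fun f g => add_divMonomial f g _
      map_smul' := fun c f => by ext; simp }

lemma divDiff_apply (k : σ) (u f : MvPolynomial σ R) :
    divDiff k u f = aeval (Function.update X k u) (f.divMonomial (.single k 1)) :=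
  rfl

lemma divDiff_X_mul_add (k : σ) (u g : MvPolynomial σ R) {r : MvPolynomial σ R}
    (hr : r ∈ supported R {k}ᶜ) :
    divDiff k u (X k * g + r) = aeval (Function.update X k u) g := by
  rw [divDiff_apply, ← eq_divMonomial_single rfl]
  exact fun d hd => mem_support_notMem_vars_zero hd fun hk => mem_supported.mp hr hk rfl

lemma divDiff_X_mul (k : σ) (u g : MvPolynomial σ R) :
    divDiff k u (X k * g) = aeval (Function.update X k u) g := by
  simpa using divDiff_X_mul_add k u g (zero_mem _)

lemma divDiff_of_mem_supported {k : σ} (u : MvPolynomial σ R) {r : MvPolynomial σ R}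
    (hr : r ∈ supported R {k}ᶜ) : divDiff k u r = 0 := by
  simpa using divDiff_X_mul_add k u 0 hr

lemma divDiff_mul_of_mem_supported {k : σ} (u : MvPolynomial σ R) {h : MvPolynomial σ R}
    (hh : h ∈ supported R {k}ᶜ) (f : MvPolynomial σ R) :
    divDiff k u (h * f) = h * divDiff k u f := by
  obtain ⟨g, r, hr, rfl⟩ := exists_eq_X_mul_add k f
  rw [mul_add, mul_left_comm, divDiff_X_mul_add k u _ (mul_mem hh hr), divDiff_X_mul_add k u _ hr,
    map_mul, aeval_update_X_of_mem_supported u hh]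

lemma divDiff_X_pow_succ_mul (k : σ) (u : MvPolynomial σ R) (n : ℕ) (g : MvPolynomial σ R) :
    divDiff k u (X k ^ (n + 1) * g) = u ^ n * aeval (Function.update X k u) g := by
  rw [pow_succ', mul_assoc, divDiff_X_mul, map_mul, map_pow, aeval_X, Function.update_self]

lemma divDiff_relation_mul {k : σ} {u : MvPolynomial σ R} (hu : u ∈ supported R {k}ᶜ)
    (g : MvPolynomial σ R) : divDiff k u ((X k ^ 2 - u * X k) * g) = 0 := by
  have hfactor : (X k ^ 2 - u * X k) * g = X k * ((X k - u) * g) := by ring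
  rw [hfactor, divDiff_X_mul, map_mul, map_sub, aeval_X, Function.update_self,
    aeval_update_X_of_mem_supported u hu, sub_self, zero_mul]

lemma divDiff_mem_pow_idealOfVars (k : σ) {u : MvPolynomial σ R} (hu : u ∈ idealOfVars σ R)
    {n : ℕ} {f : MvPolynomial σ R} (hf : f ∈ idealOfVars σ R ^ (n + 1)) :
    divDiff k u f ∈ idealOfVars σ R ^ n := by
  refine aeval_mem_pow_of_mem_pow_idealOfVars (fun i => ?_)
    (divMonomial_single_mem_pow_idealOfVars k hf)
  obtain rfl | hik := eq_or_ne i k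
  · rwa [Function.update_self]
  · rw [Function.update_of_ne hik]
    exact Ideal.subset_span (Set.mem_range_self i)

end DividedDifference

section TopCoefficient

variable {m : ℕ} {R : Type*} [CommRing R] {u : Fin m → MvPolynomial (Fin m) R}

/-- The constant term of the composite, over the first `j` variables, of the divided differences
between `0` and `u k`, the one in the last variable being applied first. For `j = m` it computes
the coefficient of `y₁⋯y_m` modulo the relations `y_k² = u_k y_k`. -/
noncomputable def topCoeff (u : Fin m → MvPolynomial (Fin m) R) :
    ℕ → MvPolynomial (Fin m) R →ₗ[R] R
  | 0 => lcoeff R 0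
  | j + 1 => if h : j < m then topCoeff u j ∘ₗ divDiff ⟨j, h⟩ (u ⟨j, h⟩) else topCoeff u j

lemma topCoeff_succ (u : Fin m → MvPolynomial (Fin m) R) {j : ℕ} (hj : j < m)
    (f : MvPolynomial (Fin m) R) :
    topCoeff u (j + 1) f = topCoeff u j (divDiff ⟨j, hj⟩ (u ⟨j, hj⟩) f) := by
  rw [topCoeff, dif_pos hj, LinearMap.comp_apply]

lemma topCoeff_eq_zero_of_mem_pow_idealOfVars (hu : ∀ k, u k ∈ idealOfVars (Fin m) R) {j : ℕ}
    (hj : j ≤ m) {f : MvPolynomial (Fin m) R} (hf : f ∈ idealOfVars (Fin m) R ^ (j + 1)) :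
    topCoeff u j f = 0 := by
  induction j generalizing f with
  | zero => exact (mem_pow_idealOfVars_iff' _ _).mp hf 0 (by simp)
  | succ j ih =>
    rw [topCoeff_succ u hj]
    exact ih (Nat.le_of_succ_le hj) (divDiff_mem_pow_idealOfVars _ (hu _) hf)

lemma topCoeff_eq_of_sub_mem_pow_idealOfVars (hu : ∀ k, u k ∈ idealOfVars (Fin m) R) {j : ℕ}
    (hj : j ≤ m) {f g : MvPolynomial (Fin m) R}
    (hfg : f - g ∈ idealOfVars (Fin m) R ^ (j + 1)) : topCoeff u j f = topCoeff u j g := by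
  rw [← sub_eq_zero, ← map_sub]
  exact topCoeff_eq_zero_of_mem_pow_idealOfVars hu hj hfg

lemma topCoeff_relation_mul (hu : ∀ k, u k ∈ supported R (Set.Iio k)) {k : Fin m} {j : ℕ}
    (hkj : k < j) (hj : j ≤ m) (g : MvPolynomial (Fin m) R) :
    topCoeff u j ((X k ^ 2 - u k * X k) * g) = 0 := by
  induction j generalizing g with
  | zero => exact absurd hkj (Nat.not_lt_zero _)
  | succ j ih =>
    have huj : u k ∈ supported R {(⟨j, hj⟩ : Fin m)}ᶜ :=
      supported_mono (fun i (hi : i < k) => (hi.trans_le (Nat.le_of_lt_succ hkj)).ne) (hu k)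
    rw [topCoeff_succ u hj]
    rcases Nat.lt_succ_iff_lt_or_eq.mp hkj with hlt | heq
    · have hX : (X k : MvPolynomial (Fin m) R) ∈ supported R {(⟨j, hj⟩ : Fin m)}ᶜ :=
        X_mem_supported_of_mem (Fin.ne_of_lt hlt)
      rw [divDiff_mul_of_mem_supported _ (sub_mem (pow_mem hX 2) (mul_mem huj hX))]
      exact ih hlt (Nat.le_of_succ_le hj) _
    · obtain rfl : k = ⟨j, hj⟩ := Fin.ext heq
      rw [divDiff_relation_mul huj, map_zero]

lemma topCoeff_eq_zero_of_mem_span_relations (hu : ∀ k, u k ∈ supported R (Set.Iio k))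
    {f : MvPolynomial (Fin m) R}
    (hf : f ∈ Ideal.span (Set.range fun k => X k ^ 2 - u k * X k)) : topCoeff u m f = 0 := by
  obtain ⟨g, rfl⟩ := Ideal.mem_span_range_iff_exists_fun.mp hf
  rw [map_sum]
  refine Finset.sum_eq_zero fun k _ => ?_
  rw [mul_comm]
  exact topCoeff_relation_mul hu k.2 le_rfl _

lemma topCoeff_prod_X (u : Fin m → MvPolynomial (Fin m) R) {j : ℕ} (hj : j ≤ m)
    (I : Finset (Fin m)) :
    topCoeff u j (∏ i ∈ I, X i) = if I = ({i | i < j} : Finset (Fin m)) then 1 else 0 := by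
  induction j generalizing I with
  | zero =>
    rw [topCoeff, lcoeff_apply, ← constantCoeff_eq, map_prod]
    simp [Finset.prod_const, zero_pow_eq]
  | succ j ih =>
    set k : Fin m := ⟨j, hj⟩
    have hinsert : ({i | i < j + 1} : Finset (Fin m)) =
        insert k ({i | i < j} : Finset (Fin m)) := by
      ext i
      simp [k, Fin.ext_iff, Nat.le_iff_lt_or_eq, or_comm]
    rw [topCoeff_succ u hj, hinsert]
    by_cases hk : k ∈ I
    · have hk' : k ∉ ({i | i < j} : Finset (Fin m)) := by simp [k]
      have hprod : (∏ i ∈ I.erase k, X i : MvPolynomial (Fin m) R) ∈ supported R {k}ᶜ :=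
        prod_mem fun i hi => X_mem_supported_of_mem (Finset.ne_of_mem_erase hi)
      rw [← Finset.mul_prod_erase I _ hk, divDiff_X_mul, aeval_update_X_of_mem_supported _ hprod,
        ih (Nat.le_of_succ_le hj)]
      simp only [Finset.erase_eq_iff_eq_insert hk hk']
    · have hprod : (∏ i ∈ I, X i : MvPolynomial (Fin m) R) ∈ supported R {k}ᶜ :=
        prod_mem fun i hi => X_mem_supported_of_mem (ne_of_mem_of_not_mem hi hk)
      rw [divDiff_of_mem_supported _ hprod, map_zero, if_neg]
      rintro rfl
      exact hk (Finset.mem_insert_self _ _)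

theorem topCoeff_eq_coeff_univ (hu : ∀ k, u k ∈ supported R (Set.Iio k))
    {f : MvPolynomial (Fin m) R} {c : Finset (Fin m) → R}
    (hf : f - ∑ I, c I • ∏ i ∈ I, X i ∈ Ideal.span (Set.range fun k => X k ^ 2 - u k * X k)) :
    topCoeff u m f = c Finset.univ := by
  have hzero := topCoeff_eq_zero_of_mem_span_relations hu hf
  rw [map_sub, sub_eq_zero] at hzero
  rw [hzero, map_sum]
  simp [topCoeff_prod_X u le_rfl]

end TopCoefficient

section Truncation

lemma coeff_trunc {σ : Type*} (n : ℕ) (f : MvPolynomial σ ℤ) (d : σ →₀ ℕ) :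
    coeff d (trunc n f) = if d.degree ≤ n then coeff d f else 0 := by
  classical
  simp only [trunc, coeff_sum, coeff_monomial, Finset.sum_ite_eq', Finset.mem_filter,
    mem_support_iff, Finsupp.degree_apply, Finsupp.sum]
  grind

lemma sub_trunc_mem_pow_idealOfVars {σ : Type*} (n : ℕ) (f : MvPolynomial σ ℤ) :
    f - trunc n f ∈ idealOfVars σ ℤ ^ (n + 1) := by
  rw [mem_pow_idealOfVars_iff']
  intro d hd
  rw [coeff_sub, coeff_trunc, if_pos (Nat.le_of_lt_succ hd), sub_self]

variable {m : ℕ}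

lemma coeffOf_mem_supported (k : Fin m) (n : ℕ) (f : MvPolynomial (Fin m) ℤ) :
    coeffOf k n f ∈ supported ℤ {k}ᶜ := by
  refine sum_mem fun d _ => mem_supported.mpr fun i hi => ?_
  obtain ⟨e, he, hie⟩ := (mem_vars_iff_mem_support i).mp hi
  obtain rfl := Finset.mem_singleton.mp (support_monomial_subset he)
  rw [Finsupp.support_erase] at hie
  exact Finset.ne_of_mem_erase hie

lemma coeffOf_mul_X_pow (k : Fin m) (n : ℕ) (f : MvPolynomial (Fin m) ℤ) :
    coeffOf k n f * X k ^ n = ∑ d ∈ f.support with d k = n, monomial d (coeff d f) := by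
  rw [coeffOf, Finset.sum_mul]
  refine Finset.sum_congr rfl fun d hd => ?_
  rw [X_pow_eq_monomial, monomial_mul, mul_one, ← (Finset.mem_filter.mp hd).2,
    Finsupp.erase_add_single]

lemma X_pow_dvd_sub_sum_coeffOf (k : Fin m) (n : ℕ) (f : MvPolynomial (Fin m) ℤ) :
    X k ^ n ∣ f - ∑ i ∈ Finset.range n, coeffOf k i f * X k ^ i := by
  have hlow : ∑ i ∈ Finset.range n, coeffOf k i f * X k ^ i =
      ∑ d ∈ f.support with d k < n, monomial d (coeff d f) := by
    simp only [coeffOf_mul_X_pow, Finset.sum_filter]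
    rw [Finset.sum_comm]
    simp
  have hhigh : f - ∑ d ∈ f.support with d k < n, monomial d (coeff d f) =
      ∑ d ∈ f.support with ¬ d k < n, monomial d (coeff d f) := by
    rw [sub_eq_iff_eq_add', Finset.sum_filter_add_sum_filter_not, support_sum_monomial_coeff]
  rw [hlow, hhigh]
  refine Finset.dvd_sum fun d hd => ?_
  rw [X_pow_eq_monomial, monomial_dvd_monomial, Finsupp.single_le_iff]
  exact ⟨Or.inr (not_lt.mp (Finset.mem_filter.mp hd).2), one_dvd _⟩

lemma divDiff_sum_coeffOf (k : Fin m) (u : MvPolynomial (Fin m) ℤ) (n : ℕ)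
    (f : MvPolynomial (Fin m) ℤ) :
    divDiff k u (∑ i ∈ Finset.range (n + 1), coeffOf k i f * X k ^ i) =
      ∑ i ∈ Finset.Icc 1 n, coeffOf k i f * u ^ (i - 1) := by
  have hpow (i : ℕ) : divDiff k u (coeffOf k (i + 1) f * X k ^ (i + 1)) =
      coeffOf k (i + 1) f * u ^ i := by
    rw [divDiff_mul_of_mem_supported u (coeffOf_mem_supported k _ f), ← mul_one (X k ^ (i + 1)),
      divDiff_X_pow_succ_mul, map_one, mul_one]
  have hzero : divDiff k u (coeffOf k 0 f * X k ^ 0) = 0 := by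
    rw [pow_zero, mul_one, divDiff_of_mem_supported u (coeffOf_mem_supported k 0 f)]
  rw [map_sum, Finset.sum_range_succ', hzero, add_zero, ← Finset.Ico_add_one_right_eq_Icc,
    Finset.sum_Ico_eq_sum_range]
  simp only [hpow, Nat.add_sub_cancel, Nat.add_comm 1]

lemma divDiff_sub_sum_coeffOf_mem_pow_idealOfVars (k : Fin m) {u : MvPolynomial (Fin m) ℤ}
    (hu : u ∈ idealOfVars (Fin m) ℤ) (n : ℕ) (f : MvPolynomial (Fin m) ℤ) :
    divDiff k u f - ∑ i ∈ Finset.Icc 1 n, coeffOf k i f * u ^ (i - 1) ∈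
      idealOfVars (Fin m) ℤ ^ n := by
  obtain ⟨g, hg⟩ := X_pow_dvd_sub_sum_coeffOf k (n + 1) f
  rw [← divDiff_sum_coeffOf, ← map_sub, hg, divDiff_X_pow_succ_mul]
  exact Ideal.mul_mem_right _ _ (Ideal.pow_mem_pow hu n)

end Truncation

section Relations

lemma pow_mul_pow_mem_supported_Iio {σ R : Type*} [Preorder σ] [CommRing R] {i k : σ}
    (hik : i < k) {p : MvPolynomial σ R} (hp : p ∈ supported R (Set.Iio i)) (a b : ℕ) :
    (X i + 1) ^ a * (-(p * X i) + 1) ^ b ∈ supported R (Set.Iio k) := by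
  have hX : (X i : MvPolynomial σ R) ∈ supported R (Set.Iio k) := X_mem_supported_of_mem hik
  have hpk : p ∈ supported R (Set.Iio k) := supported_mono (Set.Iio_subset_Iio hik.le) hp
  exact mul_mem (pow_mem (add_mem hX (one_mem _)) a)
    (pow_mem (add_mem (neg_mem (mul_mem hpk hX)) (one_mem _)) b)

variable {m : ℕ}

lemma qpol_mem_supported (A : Fin m → Fin m → ℤ) (k : Fin m) :
    qpol A k ∈ supported ℤ (Set.Iio k) := by
  induction k using WellFoundedLT.induction with
  | ind k ih =>
    rw [qpol]
    refine prod_mem fun i _ => ?_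
    have hik : i.1 < k := Finset.mem_Iio.mp i.2
    exact pow_mul_pow_mem_supported_Iio hik (ih i.1 hik) _ _

lemma qbar_sub_one_mem_supported (A : Fin m → Fin m → ℤ) (k : Fin m) :
    qbar A k - 1 ∈ supported ℤ (Set.Iio k) := by
  refine sub_mem (prod_mem fun i hi => ?_) (one_mem _)
  rw [mul_comm]
  exact pow_mul_pow_mem_supported_Iio (Finset.mem_Iio.mp hi) (qpol_mem_supported A i) _ _

lemma qbar_sub_one_mem_idealOfVars (A : Fin m → Fin m → ℤ) (k : Fin m) :
    qbar A k - 1 ∈ idealOfVars (Fin m) ℤ := by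
  rw [← pow_one (idealOfVars (Fin m) ℤ), mem_pow_idealOfVars_iff']
  intro d hd
  obtain rfl := (Finsupp.degree_eq_zero_iff d).mp (Nat.lt_one_iff.mp hd)
  rw [← constantCoeff_eq]
  simp [qbar]

lemma divDiff_sub_Dop_mem_pow_idealOfVars (A : Fin m → Fin m → ℤ) (k : Fin m)
    (f : MvPolynomial (Fin m) ℤ) :
    divDiff k (qbar A k - 1) f - Dop A k f ∈ idealOfVars (Fin m) ℤ ^ ((k : ℕ) + 1) := by
  rw [Dop, ← sub_add_sub_cancel]
  exact add_mem
    (divDiff_sub_sum_coeffOf_mem_pow_idealOfVars k (qbar_sub_one_mem_idealOfVars A k) (k + 1) f)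
    (sub_trunc_mem_pow_idealOfVars k _)

lemma coeff_zero_DeltaAux (A : Fin m → Fin m → ℤ) {j : ℕ} (hj : j ≤ m)
    (f : MvPolynomial (Fin m) ℤ) :
    coeff 0 (DeltaAux A j f) = topCoeff (fun k => qbar A k - 1) j f := by
  induction j generalizing f with
  | zero => rfl
  | succ j ih =>
    have hjm : j < m := hj
    rw [DeltaAux, dif_pos hjm, ih hjm.le, topCoeff_succ _ hjm]
    exact (topCoeff_eq_of_sub_mem_pow_idealOfVars (qbar_sub_one_mem_idealOfVars A) hjm.le
      (divDiff_sub_Dop_mem_pow_idealOfVars A ⟨j, hjm⟩ f)).symm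

end Relations

/-- If the image of `f` in `B_A` is written in its unique expansion
`Σ_I a_I(f)·y_I`, then the top coefficient satisfies
`a_{{1,…,m}}(f) = Δ_A(f_{(m)})`. -/
theorem stmt7 {m : ℕ} (hm : 0 < m) (A : Fin m → Fin m → ℤ)
    (hA : ∀ i j : Fin m, j ≤ i → A i j = 0)
    (f : MvPolynomial (Fin m) ℤ) (c : Finset (Fin m) → ℤ)
    (hc : Ideal.Quotient.mk (relIdeal A) f = ∑ I : Finset (Fin m), c I • yI A I) :
    c Finset.univ = Delta A (trunc m f) := by
  have hmem : f - ∑ I, c I • ∏ i ∈ I, X i ∈ relIdeal A := by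
    rw [← Ideal.Quotient.eq, hc, map_sum]
    exact Finset.sum_congr rfl fun I _ => (map_zsmul (Ideal.Quotient.mk (relIdeal A)) _ _).symm
  calc c Finset.univ = topCoeff (fun k => qbar A k - 1) m f :=
        (topCoeff_eq_coeff_univ (qbar_sub_one_mem_supported A) hmem).symm
    _ = topCoeff (fun k => qbar A k - 1) m (trunc m f) :=
        topCoeff_eq_of_sub_mem_pow_idealOfVars (qbar_sub_one_mem_idealOfVars A) le_rfl
          (sub_trunc_mem_pow_idealOfVars m f)
    _ = Delta A (trunc m f) := (coeff_zero_DeltaAux A le_rfl _).symm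
end
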